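/- arXiv:2111.14477 — 3 statements merged into one kernel-verified Lean document; each statement's English description precedes it below -/
import Mathlib

section
/- Let n be odd, let d > 1 be a proper divisor of n which is not a perfect square, let n' = n/d, and suppose gcd(d, n') = 1. Let f : Z_n → Z_{n'} be the natural map. Then U(n') ⊆ f(S(n)), i.e., every unit of Z_{n'} is the image under f of some element of S(n). -/
open scoped BigOperators

/-- `S` is an `A`-weighted zero-sum sequence in `ZMod n`. -/
def IsWZS {n : ℕ} (A : Set (ZMod n)) {l : ℕ} (S : Fin l → ZMod n) : Prop :=
  ∃ a : Fin l → ZMod n, (∀ i, a i ∈ A) ∧ ∑ i, a i * S i = 0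

/-- `S` has a nonempty subsequence which is an `A`-weighted zero-sum sequence. -/
def HasWZSSub {n : ℕ} (A : Set (ZMod n)) {l : ℕ} (S : Fin l → ZMod n) : Prop :=
  ∃ I : Finset (Fin l), I.Nonempty ∧ ∃ a : Fin l → ZMod n,
    (∀ i ∈ I, a i ∈ A) ∧ ∑ i ∈ I, a i * S i = 0

/-- The `A`-weighted Davenport constant of `ZMod n`: the least positive integer `k`
such that every sequence of `k` elements of `ZMod n` has a nonempty subsequence
which is an `A`-weighted zero-sum sequence. -/
noncomputable def DavW (n : ℕ) (A : Set (ZMod n)) : ℕ :=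
  sInf {k | 0 < k ∧ ∀ S : Fin k → ZMod n, HasWZSSub A S}

/-- An `A`-extremal sequence for the Davenport constant: a sequence of length
`D_A(n) - 1` with no nonempty `A`-weighted zero-sum subsequence. -/
def IsExtremal (n : ℕ) (A : Set (ZMod n)) {l : ℕ} (S : Fin l → ZMod n) : Prop :=
  l = DavW n A - 1 ∧ ¬ HasWZSSub A S

/-- The set of units of `ZMod n`, as a weight set. -/
def USet (n : ℕ) : Set (ZMod n) := {a | IsUnit a}

/-- `S(n)`: the units `a` of `ZMod n` with Jacobi symbol `(a/n) = 1`. -/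
def JSet (n : ℕ) : Set (ZMod n) := {a | IsUnit a ∧ jacobiSym (a.val : ℤ) n = 1}

/-- `L(n;p)`: the units `a` of `ZMod n` with `(a/n) = (a/p)`. -/
def LSet (n p : ℕ) : Set (ZMod n) :=
  {a | IsUnit a ∧ jacobiSym (a.val : ℤ) n = jacobiSym (a.val : ℤ) p}

/-- Two sequences are equivalent with respect to the weight set `A`. -/
def EquivWrt {n : ℕ} (A : Set (ZMod n)) {k : ℕ} (x y : Fin k → ZMod n) : Prop :=
  ∃ (a : Fin k → ZMod n) (c : (ZMod n)ˣ) (σ : Equiv.Perm (Fin k)),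
    (∀ i, a i ∈ A) ∧ ∀ i, y (σ i) = (c : ZMod n) * (a i * x i)

/-!
Since `d` and `m = n / d` are coprime, a lift of a unit `y` of `ℤ/m` to `ℤ/n` may be prescribed
freely modulo `d`. By multiplicativity, its Jacobi symbol is that of `y` modulo `m` times the
symbol of the prescribed residue, so it suffices that `(· / d)` takes both signs. It does because
`d` is not a square: some odd prime `p` occurs in `d` to an odd power, and a residue that is a
nonsquare modulo `p` and `1` modulo the rest of `d` has symbol `-1`.
-/

open scoped NumberTheorySymbols

theorem jacobiSym_congr {a b n : ℕ} (h : a ≡ b [MOD n]) : J(a | n) = J(b | n) :=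
  jacobiSym.mod_left' (Int.natCast_modEq_iff.mpr h)

theorem exists_modEq_jacobiSym_mul {m n : ℕ} [NeZero m] [NeZero n] (h : m.Coprime n) (x y : ℕ) :
    ∃ z : ℕ, z ≡ y [MOD n] ∧ J(z | m * n) = J(x | m) * J(y | n) := by
  obtain ⟨z, hzx, hzy⟩ := Nat.chineseRemainder h x y
  exact ⟨z, hzy, by rw [jacobiSym.mul_right, jacobiSym_congr hzx, jacobiSym_congr hzy]⟩

theorem exists_jacobiSym_prime_eq_neg_one {p : ℕ} [Fact p.Prime] (hp : p ≠ 2) :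
    ∃ b : ℕ, J(b | p) = -1 := by
  obtain ⟨a, ha⟩ := FiniteField.exists_nonsquare (F := ZMod p) (by rwa [ZMod.ringChar_zmod_n])
  refine ⟨a.val, ZMod.nonsquare_iff_jacobiSym_eq_neg_one.mpr ?_⟩
  rwa [Int.cast_natCast, ZMod.natCast_zmod_val]

theorem exists_jacobiSym_eq_neg_one {d : ℕ} (hodd : Odd d) (hsq : ¬IsSquare d) :
    ∃ b : ℕ, J(b | d) = -1 := by
  induction d using Nat.recOnPrimeCoprime with
  | zero => exact absurd IsSquare.zero hsq
  | prime_pow p k hp =>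
    have : Fact p.Prime := ⟨hp⟩
    have hk : Odd k := Nat.not_even_iff_odd.mp fun hk => hsq (hk.isSquare_pow p)
    have hp2 : p ≠ 2 := hodd.ne_two_of_dvd_nat (dvd_pow_self p hk.pos.ne')
    obtain ⟨b, hb⟩ := exists_jacobiSym_prime_eq_neg_one hp2
    exact ⟨b, by rw [jacobiSym.pow_right, hb, hk.neg_one_pow]⟩
  | coprime m n hm hn hmn ihm ihn =>
    have : NeZero m := ⟨by lia⟩
    have : NeZero n := ⟨by lia⟩
    obtain ⟨hm_odd, hn_odd⟩ := Nat.odd_mul.mp hodd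
    by_cases hm_sq : IsSquare m
    · obtain ⟨y, hy⟩ := ihn hn_odd fun hn_sq => hsq (hm_sq.mul hn_sq)
      obtain ⟨z, -, hz⟩ := exists_modEq_jacobiSym_mul hmn 1 y
      exact ⟨z, by rw [hz, hy, Nat.cast_one, jacobiSym.one_left, one_mul]⟩
    · obtain ⟨x, hx⟩ := ihm hm_odd hm_sq
      obtain ⟨z, -, hz⟩ := exists_modEq_jacobiSym_mul hmn x 1
      exact ⟨z, by rw [hz, hx, Nat.cast_one, jacobiSym.one_left, mul_one]⟩

theorem exists_jacobiSym_mul_eq_one {d : ℕ} (hodd : Odd d) (hsq : ¬IsSquare d) {ε : ℤ}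
    (hε : ε = 1 ∨ ε = -1) : ∃ b : ℕ, J(b | d) * ε = 1 := by
  rcases hε with rfl | rfl
  · exact ⟨1, by rw [Nat.cast_one, jacobiSym.one_left, one_mul]⟩
  · obtain ⟨b, hb⟩ := exists_jacobiSym_eq_neg_one hodd hsq
    exact ⟨b, by rw [hb, neg_one_mul, neg_neg]⟩

theorem isUnit_natCast_iff_jacobiSym_ne_zero {n x : ℕ} [NeZero n] :
    IsUnit (x : ZMod n) ↔ J(x | n) ≠ 0 := by
  rw [ZMod.isUnit_iff_coprime, Nat.coprime_iff_gcd_eq_one, ← Int.gcd_natCast_natCast, Ne,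
    jacobiSym.eq_zero_iff_not_coprime, Ne, not_not]

theorem natCast_mem_JSet {n x : ℕ} [NeZero n] : (x : ZMod n) ∈ JSet n ↔ J(x | n) = 1 := by
  have hval : J((x : ZMod n).val | n) = J(x | n) :=
    jacobiSym_congr (ZMod.val_natCast n x ▸ Nat.mod_modEq x n)
  change IsUnit (x : ZMod n) ∧ J((x : ZMod n).val | n) = 1 ↔ _
  rw [hval, isUnit_natCast_iff_jacobiSym_ne_zero]
  exact and_iff_right_of_imp fun h => h ▸ one_ne_zero

/-- every unit of `Z_{n'}` lifts to an element of `S(n)`. -/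
theorem units_subset_image_S (n d : ℕ) (hodd : Odd n) (hd : d ∣ n) (hd1 : 1 < d)
    (hdn : d ≠ n) (hsq : ¬ IsSquare d) (hcop : Nat.Coprime d (n / d)) :
    USet (n / d) ⊆ (ZMod.castHom (Nat.div_dvd_of_dvd hd) (ZMod (n / d))) '' JSet n := by
  have hmul : d * (n / d) = n := Nat.mul_div_cancel' hd
  have hd_odd : Odd d := hodd.of_dvd_nat hd
  have : NeZero n := ⟨hodd.pos.ne'⟩
  have : NeZero d := ⟨hd_odd.pos.ne'⟩
  have : NeZero (n / d) := ⟨(hodd.of_dvd_nat (Nat.div_dvd_of_dvd hd)).pos.ne'⟩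
  intro a ha
  obtain ⟨y, rfl⟩ := ZMod.natCast_zmod_surjective a
  have hsign : J(y | n / d) = 1 ∨ J(y | n / d) = -1 :=
    (jacobiSym.trichotomy y (n / d)).resolve_left (isUnit_natCast_iff_jacobiSym_ne_zero.mp ha)
  obtain ⟨x, hx⟩ := exists_jacobiSym_mul_eq_one hd_odd hsq hsign
  obtain ⟨z, hzy, hz⟩ := exists_modEq_jacobiSym_mul hcop x y
  refine ⟨z, natCast_mem_JSet.mpr ?_, ?_⟩
  · rw [← hx, ← hz, hmul]
  · rw [map_natCast, (ZMod.natCast_eq_natCast_iff z y (n / d)).mpr hzy]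
end

section
/- Let n be odd and squarefree and let A = S(n). Let S = (x_1,…,x_l) be a sequence in Z_n such that for every prime divisor p of n at least two terms of S are coprime to p, and such that at most one term of S is a unit of Z_n. Then S is an A-weighted zero-sum sequence. -/
open scoped BigOperators

/-!
Modulo an odd prime, two nonzero terms leave enough freedom to annihilate the sum with nonzero
weights. By the Chinese remainder theorem there are then unit weights for which the weighted sum
lies in every maximal ideal of `ZMod n`. As the terms generate the unit ideal, these weights can be
corrected by multiples of that sum, hence without leaving the units, so that the sum vanishes.

The passage to weights in `S(n)` is group theory. If `n = p ^ k * m` with `k` odd and the odd prime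
`p` not dividing `m`, then every multiple of `p ^ k` is fixed by the units that are `1` modulo `m`,
and some of these have Jacobi symbol `-1`; so the weight of such a term can be moved into `S(n)`
without changing the sum. One further term is dealt with by scaling all weights so that its own
becomes `1`.
-/

section DivisionRing

variable {K ι : Type*} [DivisionRing K] [Nontrivial Kˣ] {x : ι → K} {i j : ι}

lemma exists_units_sum_smul_ne_zero {s : Finset ι} (his : i ∈ s) (hi : x i ≠ 0) :
    ∃ u : ι → Kˣ, ∑ k ∈ s, u k • x k ≠ 0 := by
  classical
  obtain ⟨a, b, hab⟩ := exists_pair_ne Kˣ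
  by_contra! hzero
  have sum_update (c : Kˣ) : c • x i + ∑ k ∈ s.erase i, x k = 0 := by
    rw [← hzero (Function.update 1 i c), ← Finset.add_sum_erase s _ his, Function.update_self]
    congr 1
    refine Finset.sum_congr rfl fun k hk ↦ ?_
    rw [Function.update_of_ne (Finset.ne_of_mem_erase hk), Pi.one_apply, one_smul]
  have hsmul : a • x i = b • x i := add_right_cancel ((sum_update a).trans (sum_update b).symm)
  exact hab (Units.ext (mul_right_cancel₀ hi hsmul))

lemma exists_units_sum_smul_eq_zero [Fintype ι] (hij : i ≠ j) (hi : x i ≠ 0) (hj : x j ≠ 0) :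
    ∃ u : ι → Kˣ, ∑ k, u k • x k = 0 := by
  classical
  obtain ⟨u, hu⟩ := exists_units_sum_smul_ne_zero (Finset.mem_erase.2 ⟨hij, Finset.mem_univ i⟩) hi
  set t := ∑ k ∈ Finset.univ.erase j, u k • x k
  obtain ⟨c, hc⟩ : ∃ c : Kˣ, c • x j = -t :=
    ⟨Units.mk0 (-t / x j) (div_ne_zero (neg_ne_zero.2 hu) hj), div_mul_cancel₀ _ hj⟩
  have sum_rest : ∑ k ∈ Finset.univ.erase j, Function.update u j c k • x k = t :=
    Finset.sum_congr rfl fun k hk ↦ by rw [Function.update_of_ne (Finset.ne_of_mem_erase hk)]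
  refine ⟨Function.update u j c, ?_⟩
  rw [← Finset.add_sum_erase _ _ (Finset.mem_univ j), sum_rest, Function.update_self, hc,
    neg_add_cancel]

end DivisionRing

section CommRing

variable {R ι : Type*} [CommRing R] [Fintype ι] {x : ι → R}

lemma exists_units_sum_smul_eq_zero_of_sum_mem_maximal {w : ι → R}
    (hx : Ideal.span (Set.range x) = ⊤)
    (hw : ∀ m : Ideal R, m.IsMaximal → (∀ i, w i ∉ m) ∧ ∑ i, w i * x i ∈ m) :
    ∃ u : ι → Rˣ, ∑ i, u i • x i = 0 := by
  obtain ⟨r, hr⟩ : ∃ r : ι → R, ∑ i, r i * x i = 1 :=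
    Ideal.mem_span_range_iff_exists_fun.1 (hx ▸ Submodule.mem_top)
  set s := ∑ i, w i * x i with hs
  have isUnit_sub (i : ι) : IsUnit (w i - s * r i) := by
    by_contra hnot
    obtain ⟨m, hm, hmem⟩ := exists_max_ideal_of_mem_nonunits hnot
    obtain ⟨hwm, hsm⟩ := hw m hm
    exact hwm i ((m.sub_mem_iff_left (m.mul_mem_right (r i) hsm)).1 hmem)
  refine ⟨fun i ↦ (isUnit_sub i).unit, ?_⟩
  calc ∑ i, (isUnit_sub i).unit • x i = ∑ i, (w i - s * r i) * x i := rfl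
    _ = s - s * ∑ i, r i * x i := by
      simp only [sub_mul, Finset.sum_sub_distrib, Finset.mul_sum, mul_assoc, hs]
    _ = 0 := by rw [hr, mul_one, sub_self]

lemma exists_notMem_sum_mul_mem (m : Ideal R) [m.IsMaximal] [Nontrivial (R ⧸ m)ˣ]
    {i j : ι} (hij : i ≠ j) (hi : x i ∉ m) (hj : x j ∉ m) :
    ∃ w : ι → R, (∀ k, w k ∉ m) ∧ ∑ k, w k * x k ∈ m := by
  let := Ideal.Quotient.field m
  obtain ⟨u, hu⟩ := exists_units_sum_smul_eq_zero (x := fun k ↦ Ideal.Quotient.mk m (x k)) hij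
    (mt Ideal.Quotient.eq_zero_iff_mem.1 hi) (mt Ideal.Quotient.eq_zero_iff_mem.1 hj)
  choose w hw using fun k ↦ Ideal.Quotient.mk_surjective (u k : R ⧸ m)
  refine ⟨w, fun k hk ↦ (u k).ne_zero ?_, ?_⟩
  · rw [← hw k, Ideal.Quotient.eq_zero_iff_mem.2 hk]
  · rw [← Ideal.Quotient.eq_zero_iff_mem, ← hu, map_sum]
    simp only [map_mul, hw, Units.smul_def, smul_eq_mul]

lemma exists_units_sum_smul_eq_zero_of_finite_maximalSpectrum [Finite (MaximalSpectrum R)]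
    (hR : ∀ m : Ideal R, m.IsMaximal → Nontrivial (R ⧸ m)ˣ)
    (hx : ∀ m : Ideal R, m.IsMaximal → ∃ i j, i ≠ j ∧ x i ∉ m ∧ x j ∉ m) :
    ∃ u : ι → Rˣ, ∑ i, u i • x i = 0 := by
  have hspan : Ideal.span (Set.range x) = ⊤ := by
    by_contra hne
    obtain ⟨m, hm, hle⟩ := Ideal.exists_le_maximal _ hne
    obtain ⟨i, -, -, hi, -⟩ := hx m hm
    exact hi (hle (Ideal.subset_span (Set.mem_range_self i)))
  have hlocal (m : MaximalSpectrum R) :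
      ∃ w : ι → R, (∀ i, w i ∉ m.asIdeal) ∧ ∑ i, w i * x i ∈ m.asIdeal := by
    have := m.isMaximal
    have := hR m.asIdeal m.isMaximal
    obtain ⟨i, j, hij, hi, hj⟩ := hx m.asIdeal m.isMaximal
    exact exists_notMem_sum_mul_mem m.asIdeal hij hi hj
  choose w hwm hsum using hlocal
  have hcoprime : Pairwise (Function.onFun IsCoprime (MaximalSpectrum.asIdeal (R := R))) :=
    fun m m' hne ↦ Ideal.isCoprime_iff_sup_eq.2
      (m.isMaximal.coprime_of_ne m'.isMaximal fun h ↦ hne (MaximalSpectrum.ext h))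
  choose r hr using fun i ↦ Ideal.exists_forall_sub_mem_ideal hcoprime (w · i)
  refine exists_units_sum_smul_eq_zero_of_sum_mem_maximal hspan (w := r) fun m hm ↦ ⟨?_, ?_⟩
  · exact fun i hi ↦ hwm ⟨m, hm⟩ i ((m.sub_mem_iff_right hi).1 (hr i ⟨m, hm⟩))
  · have hdiff : ∑ i, r i * x i - ∑ i, w ⟨m, hm⟩ i * x i ∈ m := by
      simp only [← Finset.sum_sub_distrib, ← sub_mul]
      exact m.sum_mem fun i _ ↦ m.mul_mem_right (x i) (hr i ⟨m, hm⟩)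
    exact (m.sub_mem_iff_left (hsum ⟨m, hm⟩)).1 hdiff

end CommRing

section ZMod

variable {n : ℕ}

lemma exists_prime_dvd_forall_mem_iff_dvd_val [NeZero n] (m : Ideal (ZMod n)) [m.IsMaximal] :
    ∃ p : ℕ, p.Prime ∧ p ∣ n ∧ ∀ x : ZMod n, x ∈ m ↔ p ∣ x.val := by
  let := Ideal.Quotient.field m
  obtain ⟨p, hp⟩ := CharP.exists (ZMod n ⧸ m)
  have mk_natCast_eq_zero_iff (k : ℕ) : Ideal.Quotient.mk m (k : ZMod n) = 0 ↔ p ∣ k := by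
    rw [map_natCast, CharP.cast_eq_zero_iff (ZMod n ⧸ m) p]
  have hpn : p ∣ n := by
    rw [← mk_natCast_eq_zero_iff, ZMod.natCast_self, map_zero]
  refine ⟨p, (CharP.char_is_prime_or_zero (ZMod n ⧸ m) p).resolve_right ?_, hpn, fun x ↦ ?_⟩
  · exact ne_zero_of_dvd_ne_zero (NeZero.ne n) hpn
  · rw [← mk_natCast_eq_zero_iff, ZMod.natCast_zmod_val, Ideal.Quotient.eq_zero_iff_mem]

lemma nontrivial_units_quotient_of_odd (hodd : Odd n) (m : Ideal (ZMod n)) [m.IsMaximal] :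
    Nontrivial (ZMod n ⧸ m)ˣ := by
  have isUnit_two : IsUnit (2 : ZMod n) :=
    (ZMod.isUnit_iff_coprime 2 n).2 (Nat.coprime_two_left.2 hodd)
  have two_ne_zero : (2 : ZMod n ⧸ m) ≠ 0 := by
    simpa only [map_ofNat] using (isUnit_two.map (Ideal.Quotient.mk m)).ne_zero
  refine ⟨-1, 1, fun h ↦ two_ne_zero ?_⟩
  have hval : (-1 : ZMod n ⧸ m) = 1 := congrArg Units.val h
  linear_combination -hval

lemma exists_units_sum_smul_eq_zero_of_two_le_ncard_coprime (hodd : Odd n) {ι : Type*} [Fintype ι]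
    {x : ι → ZMod n}
    (hx : ∀ p : ℕ, p.Prime → p ∣ n → 2 ≤ {i | (x i).val.Coprime p}.ncard) :
    ∃ u : ι → (ZMod n)ˣ, ∑ i, u i • x i = 0 := by
  have : NeZero n := ⟨hodd.pos.ne'⟩
  refine exists_units_sum_smul_eq_zero_of_finite_maximalSpectrum
    (fun m _ ↦ nontrivial_units_quotient_of_odd hodd m) fun m _ ↦ ?_
  obtain ⟨p, hp, hpn, hmem⟩ := exists_prime_dvd_forall_mem_iff_dvd_val m
  have notMem_of_coprime {i : ι} (hi : (x i).val.Coprime p) : x i ∉ m :=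
    fun him ↦ hp.coprime_iff_not_dvd.1 hi.symm ((hmem _).1 him)
  obtain ⟨i, hi, j, hj, hij⟩ := (Set.one_lt_ncard (Set.toFinite _)).1 (hx p hp hpn)
  exact ⟨i, j, hij, notMem_of_coprime hi, notMem_of_coprime hj⟩

lemma isUnit_of_squarefree_of_forall_not_dvd (hsf : Squarefree n) {x : ZMod n}
    (hx : ∀ p : ℕ, p.Prime → Odd (n.factorization p) → ¬ p ^ n.factorization p ∣ x.val) :
    IsUnit x := by
  have : NeZero n := ⟨hsf.ne_zero⟩
  rw [← ZMod.natCast_zmod_val x, ZMod.isUnit_iff_coprime]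
  refine Nat.coprime_of_dvd fun p hp hpx hpn ↦ ?_
  have hnot := hx p hp
  rw [Nat.factorization_eq_one_of_squarefree hsf hp hpn, pow_one] at hnot
  exact hnot odd_one hpx

end ZMod

section Group

variable {G : Type*} [Group G]

lemma ker_sup_eq_top_of_eq_neg_one (f : G →* ℤˣ) {K : Subgroup G} {c : G} (hc : c ∈ K)
    (hfc : f c = -1) : f.ker ⊔ K = ⊤ := by
  refine (Subgroup.eq_top_iff' _).2 fun g ↦ ?_
  rcases Int.units_eq_one_or (f g) with hg | hg
  · exact Subgroup.mem_sup_left (f.mem_ker.2 hg)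
  · have hker : g * c⁻¹ ∈ f.ker := by
      rw [f.mem_ker, map_mul, map_inv, hg, hfc, mul_inv_cancel]
    simpa only [inv_mul_cancel_right] using Subgroup.mul_mem_sup hker hc

lemma exists_mem_subgroup_sum_smul_eq_zero {M ι : Type*} [AddCommMonoid M] [DistribMulAction G M]
    [Fintype ι] (H : Subgroup G) [H.Normal] {x : ι → M} {g : ι → G} (hg : ∑ i, g i • x i = 0)
    (hx : {i | H ⊔ MulAction.stabilizer G (x i) ≠ ⊤}.Subsingleton) :
    ∃ h : ι → G, (∀ i, h i ∈ H) ∧ ∑ i, h i • x i = 0 := by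
  obtain ⟨a, ha⟩ : ∃ a : G, ∀ i, H ⊔ MulAction.stabilizer G (x i) ≠ ⊤ → a * g i = 1 := by
    rcases hx.eq_empty_or_singleton with hempty | ⟨i₀, hi₀⟩
    · exact ⟨1, fun i hi ↦ (Set.eq_empty_iff_forall_notMem.1 hempty i hi).elim⟩
    · refine ⟨(g i₀)⁻¹, fun i hi ↦ ?_⟩
      have hii₀ : i = i₀ := hi₀.subset hi
      rw [hii₀, inv_mul_cancel]
  have exists_mem_smul_eq (i : ι) : ∃ h ∈ H, h • x i = (a * g i) • x i := by
    by_cases hi : H ⊔ MulAction.stabilizer G (x i) = ⊤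
    · obtain ⟨h, hh, s, hs, hmul⟩ :=
        Subgroup.mem_sup_of_normal_left.1 (hi ▸ Subgroup.mem_top (a * g i))
      exact ⟨h, hh, by rw [← hmul, mul_smul, MulAction.mem_stabilizer_iff.1 hs]⟩
    · exact ⟨1, H.one_mem, by rw [ha i hi]⟩
  choose h hH hsmul using exists_mem_smul_eq
  refine ⟨h, hH, ?_⟩
  simp only [hsmul, mul_smul]
  rw [← Finset.smul_sum, hg, smul_zero]

end Group

section Jacobi

lemma jacobiSym_val_natCast (n k : ℕ) : jacobiSym ((k : ZMod n).val : ℤ) n = jacobiSym k n := by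
  rw [ZMod.val_natCast, Int.natCast_mod, ← jacobiSym.mod_left]

/-- The homomorphism `a ↦ (a/n)` from `U(n)` to `{1, -1}` with kernel `S(n)`. It is defined for
every `n`, with Mathlib's conventions for `(a/n)` when `n` is even or zero. -/
def jacobiHom (n : ℕ) : (ZMod n)ˣ →* ℤˣ :=
  MonoidHom.toHomUnits
    { toFun u := jacobiSym ((u : ZMod n).val : ℤ) n
      map_one' := by
        rw [Units.val_one, ZMod.val_one_eq_one_mod, Int.natCast_mod, ← jacobiSym.mod_left,
          Nat.cast_one, jacobiSym.one_left]
      map_mul' u v := by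
        rw [Units.val_mul, ZMod.val_mul, Int.natCast_mod, ← jacobiSym.mod_left, Nat.cast_mul,
          jacobiSym.mul_left] }

variable {n : ℕ}

lemma coe_jacobiHom (u : (ZMod n)ˣ) :
    (jacobiHom n u : ℤ) = jacobiSym ((u : ZMod n).val : ℤ) n :=
  rfl

lemma coe_mem_JSet_of_mem_ker {u : (ZMod n)ˣ} (hu : u ∈ (jacobiHom n).ker) :
    (u : ZMod n) ∈ JSet n :=
  ⟨u.isUnit, by rw [← coe_jacobiHom, MonoidHom.mem_ker.1 hu, Units.val_one]⟩

lemma coprime_of_jacobiSym_eq_neg_one {a : ℕ} (h : jacobiSym a n = -1) : a.Coprime n := by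
  by_contra hnot
  rcases eq_or_ne n 0 with rfl | hn
  · rw [jacobiSym.zero_right] at h
    norm_num at h
  · rw [jacobiSym.eq_zero_iff.2 ⟨hn, by rwa [Int.gcd_natCast_natCast]⟩] at h
    norm_num at h

lemma exists_jacobiSym_prime_pow_eq_neg_one {p k : ℕ} (hp : p.Prime) (hp2 : p ≠ 2) (hk : Odd k) :
    ∃ a : ℕ, jacobiSym a (p ^ k) = -1 := by
  have : Fact p.Prime := ⟨hp⟩
  obtain ⟨g, hg⟩ := FiniteField.exists_nonsquare (F := ZMod p) (by rwa [ZMod.ringChar_zmod_n])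
  refine ⟨g.val, ?_⟩
  rw [jacobiSym.pow_right, ZMod.nonsquare_iff_jacobiSym_eq_neg_one.2, hk.neg_one_pow]
  rwa [Int.cast_natCast, ZMod.natCast_zmod_val]

lemma exists_jacobiHom_eq_neg_one_smul_eq [NeZero n] {q m a : ℕ} (hn : q * m = n)
    (hqm : q.Coprime m) (ha : jacobiSym a q = -1) :
    ∃ u : (ZMod n)ˣ, jacobiHom n u = -1 ∧ u • (q : ZMod n) = q := by
  obtain ⟨c, hcq, hcm⟩ := Nat.chineseRemainder hqm a 1
  have hJ : jacobiSym c n = -1 := by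
    have hqm0 : q * m ≠ 0 := hn ▸ NeZero.ne n
    have hJq : jacobiSym c q = jacobiSym a q := jacobiSym.mod_left' (mod_cast hcq)
    have hJm : jacobiSym c m = jacobiSym 1 m := jacobiSym.mod_left' (mod_cast hcm)
    rw [← hn, jacobiSym.mul_right' _ (left_ne_zero_of_mul hqm0) (right_ne_zero_of_mul hqm0),
      hJq, hJm, ha, jacobiSym.one_left, mul_one]
  refine ⟨ZMod.unitOfCoprime c (coprime_of_jacobiSym_eq_neg_one hJ), Units.ext ?_, ?_⟩
  · rw [coe_jacobiHom, ZMod.coe_unitOfCoprime, jacobiSym_val_natCast, hJ, Units.val_neg,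
      Units.val_one]
  · have hmod : q * c ≡ q * 1 [MOD n] := hn ▸ hcm.mul_left' q
    rw [Units.smul_def, ZMod.coe_unitOfCoprime, smul_eq_mul, mul_comm, ← Nat.cast_mul,
      (ZMod.natCast_eq_natCast_iff _ _ _).2 hmod, mul_one]

lemma ker_jacobiHom_sup_stabilizer_eq_top {p : ℕ} (hp : p.Prime) (hp2 : p ≠ 2)
    (hodd : Odd (n.factorization p)) {x : ZMod n} (hx : p ^ n.factorization p ∣ x.val) :
    (jacobiHom n).ker ⊔ MulAction.stabilizer (ZMod n)ˣ x = ⊤ := by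
  have hn : n ≠ 0 := by
    rintro rfl
    simp at hodd
  have : NeZero n := ⟨hn⟩
  obtain ⟨a, ha⟩ := exists_jacobiSym_prime_pow_eq_neg_one hp hp2 hodd
  obtain ⟨u, hu, hsmul⟩ := exists_jacobiHom_eq_neg_one_smul_eq
    (Nat.ordProj_mul_ordCompl_eq_self n p) ((Nat.coprime_ordCompl hp hn).pow_left _) ha
  obtain ⟨y, hy⟩ := hx
  refine ker_sup_eq_top_of_eq_neg_one _ (MulAction.mem_stabilizer_iff.2 ?_) hu
  rw [← ZMod.natCast_zmod_val x, hy, Nat.cast_mul, ← smul_mul_assoc, hsmul]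

end Jacobi

theorem sset_zero_sum_general (n : ℕ) (hodd : Odd n) {l : ℕ} (S : Fin l → ZMod n)
    (h2 : ∀ p : ℕ, p.Prime → p ∣ n → 2 ≤ {i : Fin l | Nat.Coprime ((S i).val) p}.ncard)
    (h1 : {i : Fin l | ∀ p : ℕ, p.Prime → Odd (n.factorization p) →
      ¬ p ^ n.factorization p ∣ (S i).val}.ncard ≤ 1) :
    IsWZS (JSet n) S := by
  obtain ⟨u, hu⟩ := exists_units_sum_smul_eq_zero_of_two_le_ncard_coprime hodd h2
  have hstab : {i | (jacobiHom n).ker ⊔ MulAction.stabilizer (ZMod n)ˣ (S i) ≠ ⊤}.Subsingleton := by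
    refine (Set.ncard_le_one_iff_subsingleton.1 h1).anti fun i hi p hp hoddp hdvd ↦ hi ?_
    have hp2 : p ≠ 2 := by
      rintro rfl
      rw [Nat.factorization_eq_zero_of_not_dvd hodd.not_two_dvd_nat] at hoddp
      exact Nat.not_odd_zero hoddp
    exact ker_jacobiHom_sup_stabilizer_eq_top hp hp2 hoddp hdvd
  obtain ⟨v, hv, hsum⟩ := exists_mem_subgroup_sum_smul_eq_zero (jacobiHom n).ker hu hstab
  exact ⟨fun i ↦ v i, fun i ↦ coe_mem_JSet_of_mem_ker (hv i), hsum⟩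

theorem sset_zero_sum (n : ℕ) (hodd : Odd n) (hsf : Squarefree n)
    {l : ℕ} (S : Fin l → ZMod n)
    (h2 : ∀ p : ℕ, p.Prime → p ∣ n → 2 ≤ {i : Fin l | Nat.Coprime ((S i).val) p}.ncard)
    (h1 : {i : Fin l | IsUnit (S i)}.ncard ≤ 1) :
    IsWZS (JSet n) S := by
  exact sset_zero_sum_general n hodd S h2 <| h1.trans' <|
    Set.ncard_le_ncard fun _ hi ↦ isUnit_of_squarefree_of_forall_not_dvd hsf hi
end

section
/- Let n be odd and squarefree with Ω(n) ≥ 3 and with every prime divisor of n at least 7. Then a sequence S in Z_n is an S(n)-extremal sequence for the Davenport constant if and only if S is a U(n)-extremal sequence for the Davenport constant. -/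
open scoped BigOperators

/-!
By the Chinese remainder theorem, a zero-sum subsequence with weights in `S(n)` amounts to signed
zero-sums modulo each prime `p ∣ n`, the signs being the quadratic characters of the weights,
subject to the one condition that for each index the product of its signs over all `p` is `1`.

Modulo a prime `p ≥ 7`, Cauchy–Davenport allows every sign pattern as soon as three terms are
nonzero. If no term is nonzero there is no constraint either, exactly one nonzero term is
impossible, and exactly two only fix the ratio of their signs. Hence a `U(n)`-weighted zero-sum
subsequence can be given weights in `S(n)` unless its nonzero terms are at the same two positions
modulo every `p`; in that case appending any third nonzero term of the sequence creates a prime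
with three of them. So the weight sets `S(n)` and `U(n)` admit zero-sum subsequences in the same
sequences of length at least `3`, and `D_{U(n)}(n) > Ω(n) ≥ 3`.
-/

open Finset
open scoped Pointwise

section QuadraticChar

lemma ringChar_zmod_ne_two {p : ℕ} (hp : 2 < p) : ringChar (ZMod p) ≠ 2 := by
  rw [ZMod.ringChar_zmod_n]
  exact hp.ne'

lemma add_add_eq_univ_of_card {p : ℕ} [Fact p.Prime] {X Y Z : Finset (ZMod p)}
    (hX : X.Nonempty) (hY : Y.Nonempty) (hZ : Z.Nonempty) (h : p + 2 ≤ #X + #Y + #Z) :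
    X + Y + Z = univ := by
  have hXY := ZMod.cauchy_davenport Fact.out hX hY
  have hXYZ := ZMod.cauchy_davenport Fact.out (hX.add hY) hZ
  have hZ_pos := hZ.card_pos
  rw [← card_eq_iff_eq_univ, ZMod.card]
  have hle := card_le_univ (X + Y + Z)
  rw [ZMod.card] at hle
  omega

variable {F : Type*} [Field F] [Fintype F] [DecidableEq F]

lemma two_mul_card_quadraticChar_eq_add_one (hF : ringChar F ≠ 2) (e : ℤˣ) :
    2 * #{a : F | quadraticChar F a = e} + 1 = Fintype.card F := by
  have hterm (a : F) : 2 * (if quadraticChar F a = e then 1 else 0) =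
      (if a = 0 then 0 else 1) + e * quadraticChar F a := by
    by_cases ha : a = 0
    · simp [ha, e.ne_zero.symm]
    · rcases quadraticChar_dichotomy ha with h | h <;>
        rcases Int.units_eq_one_or e with rfl | rfl <;> simp [h, ha]
  have hsum : 2 * (#{a : F | quadraticChar F a = e} : ℤ) = #{a : F | a ≠ 0} := by
    have := sum_congr (s₁ := univ) rfl fun a _ => hterm a
    rw [← mul_sum, sum_add_distrib, ← mul_sum, quadraticChar_sum_zero hF] at this
    simpa [sum_boole, sum_ite] using this
  have hne : #{a : F | a ≠ 0} + 1 = Fintype.card F := by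
    rw [filter_ne', card_erase_add_one (mem_univ _), card_univ]
  omega

lemma exists_quadraticChar_eq (hF : ringChar F ≠ 2) (e : ℤˣ) :
    ∃ a : F, quadraticChar F a = e := by
  rcases Int.units_eq_one_or e with rfl | rfl
  · exact ⟨1, map_one _⟩
  · exact quadraticChar_exists_neg_one hF

lemma exists_units_eq_quadraticChar {a : F} (ha : a ≠ 0) : ∃ e : ℤˣ, quadraticChar F a = e :=
  (quadraticChar_dichotomy ha).elim (fun h => ⟨1, h⟩) (fun h => ⟨-1, h⟩)

lemma exists_quadraticChar_eq_and_sum_three_eq {p : ℕ} [Fact p.Prime] (hp : 7 ≤ p)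
    {x y z : ZMod p} (hx : x ≠ 0) (hy : y ≠ 0) (hz : z ≠ 0) (e f g : ℤˣ) (c : ZMod p) :
    ∃ a b d : ZMod p, quadraticChar _ a = e ∧ quadraticChar _ b = f ∧ quadraticChar _ d = g ∧
      a * x + b * y + d * z = c := by
  let C (e : ℤˣ) (u : ZMod p) : Finset (ZMod p) :=
    image (· * u) {a | quadraticChar _ a = e}
  have hcard (e : ℤˣ) {u : ZMod p} (hu : u ≠ 0) : 2 * #(C e u) + 1 = p := by
    rw [card_image_of_injective _ (mul_left_injective₀ hu),
      two_mul_card_quadraticChar_eq_add_one (ringChar_zmod_ne_two (by omega)), ZMod.card]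
  have hxe := hcard e hx
  have hyf := hcard f hy
  have hzg := hcard g hz
  have hC : C e x + C f y + C g z = univ := by
    refine add_add_eq_univ_of_card ?_ ?_ ?_ (by omega) <;> rw [← card_pos] <;> omega
  have hc : c ∈ C e x + C f y + C g z := hC ▸ mem_univ c
  simp only [C, mem_add, mem_image, mem_filter_univ] at hc
  obtain ⟨_, ⟨_, ⟨a, ha, rfl⟩, _, ⟨b, hb, rfl⟩, rfl⟩, _, ⟨d, hd, rfl⟩, h⟩ := hc
  exact ⟨a, b, d, ha, hb, hd, h⟩

end QuadraticChar

section Support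

variable {ι M : Type*} [Zero M] [DecidableEq M]

/-- The support of `x` inside the finite index set `I`. -/
def supportOn (x : ι → M) (I : Finset ι) : Finset ι := {i ∈ I | x i ≠ 0}

variable {x : ι → M} {I : Finset ι}

lemma mem_supportOn {i : ι} : i ∈ supportOn x I ↔ i ∈ I ∧ x i ≠ 0 := mem_filter

lemma supportOn_insert_of_eq_zero [DecidableEq ι] {t : ι} (ht : x t = 0) :
    supportOn x (insert t I) = supportOn x I :=
  filter_insert .. |>.trans (if_neg (not_not.2 ht))

lemma supportOn_insert_of_ne_zero [DecidableEq ι] {t : ι} (ht : x t ≠ 0) :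
    supportOn x (insert t I) = insert t (supportOn x I) :=
  filter_insert .. |>.trans (if_pos ht)

lemma sum_supportOn {R : Type*} [NonUnitalNonAssocSemiring R] [DecidableEq R] (a x : ι → R)
    (I : Finset ι) : ∑ i ∈ supportOn x I, a i * x i = ∑ i ∈ I, a i * x i :=
  sum_filter_of_ne fun _ _ => right_ne_zero_of_mul

end Support

section SignedZeroSum

variable {ι F : Type*} [Field F] [Fintype F] [DecidableEq F]

/-- The subsequence of `x` indexed by `I` is a weighted zero-sum over a finite field, with weights
whose quadratic characters are prescribed by the sign pattern `ε`. This is the local form of an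
`S(n)`-weighted zero-sum. -/
def IsSignedZeroSum (ε : ι → ℤˣ) (x : ι → F) (I : Finset ι) : Prop :=
  ∃ a : ι → F, (∀ i ∈ I, quadraticChar F (a i) = ε i) ∧ ∑ i ∈ I, a i * x i = 0

variable {ε δ : ι → ℤˣ} {x : ι → F} {I J : Finset ι}

lemma exists_isSignedZeroSum_of_sum_eq_zero {a : ι → F} (ha : ∀ i ∈ I, a i ≠ 0)
    (hsum : ∑ i ∈ I, a i * x i = 0) : ∃ ε, IsSignedZeroSum ε x I := by
  choose! ε hε using fun i hi => exists_units_eq_quadraticChar (ha i hi)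
  exact ⟨ε, a, hε, hsum⟩

namespace IsSignedZeroSum

lemma congr_supportOn (hF : ringChar F ≠ 2) (h : IsSignedZeroSum ε x I)
    (hIJ : supportOn x I = supportOn x J) (hεδ : ∀ i ∈ supportOn x I, ε i = δ i) :
    IsSignedZeroSum δ x J := by
  obtain ⟨a, ha, hsum⟩ := h
  choose b hb using exists_quadraticChar_eq hF
  refine ⟨fun i => if x i = 0 then b (δ i) else a i, fun i hi => ?_, ?_⟩
  · by_cases hx : x i = 0
    · simp only [hx, if_true, hb]
    · have hiI : i ∈ supportOn x I := hIJ ▸ mem_supportOn.2 ⟨hi, hx⟩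
      simp only [hx, if_false, ha i (mem_supportOn.1 hiI).1, hεδ i hiI]
  · rw [← sum_supportOn, ← hIJ]
    refine (sum_congr rfl fun i hi => ?_).trans ((sum_supportOn a x I).trans hsum)
    rw [if_neg (mem_supportOn.1 hi).2]

lemma const_mul (hF : ringChar F ≠ 2) (h : IsSignedZeroSum ε x I) (k : ℤˣ) :
    IsSignedZeroSum (fun i => k * ε i) x I := by
  obtain ⟨a, ha, hsum⟩ := h
  obtain ⟨b, hb⟩ := exists_quadraticChar_eq hF k
  refine ⟨fun i => b * a i, fun i hi => by rw [map_mul, hb, ha i hi, Units.val_mul], ?_⟩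
  simp only [mul_assoc, ← mul_sum, hsum, mul_zero]

lemma card_supportOn_ne_one (h : IsSignedZeroSum ε x I) : #(supportOn x I) ≠ 1 := by
  intro hcard
  obtain ⟨i, hi⟩ := card_eq_one.1 hcard
  obtain ⟨a, ha, hsum⟩ := h
  obtain ⟨hiI, hx⟩ := mem_supportOn.1 (hi ▸ mem_singleton_self i)
  rw [← sum_supportOn, hi, sum_singleton, mul_eq_zero, or_iff_left hx] at hsum
  simpa [hsum, (ε i).ne_zero.symm] using ha i hiI

-- At a position where only one of the two sequences vanishes the sign of the other is free; the
-- remaining relation, at `w`, is met by rescaling `ε`.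
lemma exists_mul_eq [DecidableEq ι] {K : Type*} [Field K] [Fintype K] [DecidableEq K] {y : ι → K}
    (hF : ringChar F ≠ 2) (hK : ringChar K ≠ 2)
    (hx : IsSignedZeroSum ε x I) (hy : IsSignedZeroSum δ y I) {v w : ι}
    (hvw : supportOn x I ⊆ {v, w}) (hv : v ∉ supportOn y I) (π : ι → ℤˣ) :
    ∃ ε' δ', IsSignedZeroSum ε' x I ∧ IsSignedZeroSum δ' y I ∧ ε' * δ' = π := by
  set k := π w * δ w * ε w with hk
  set ε' := Function.update (π * δ) v (k * ε v) with hε'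
  refine ⟨ε', π * ε', (hx.const_mul hF k).congr_supportOn hF rfl fun i hi => ?_,
    hy.congr_supportOn hK rfl fun i hi => ?_, ?_⟩
  · by_cases hiv : i = v
    · simp [hε', hiv]
    · obtain rfl : i = w := by simpa [hiv] using hvw hi
      simp [hε', hiv, hk, mul_assoc]
  · have hiv : i ≠ v := ne_of_mem_of_not_mem hi hv
    simp [hε', hiv, ← mul_assoc]
  · ext i
    simp [mul_left_comm (ε' i)]

end IsSignedZeroSum

variable {p : ℕ} [Fact p.Prime] {x : ι → ZMod p}

lemma isSignedZeroSum_of_three_le_card (hp : 7 ≤ p) (h : 3 ≤ #(supportOn x I)) (ε : ι → ℤˣ) :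
    IsSignedZeroSum ε x I := by
  classical
  obtain ⟨T, hT, hTcard⟩ := exists_subset_card_eq h
  obtain ⟨i, j, k, hij, hik, hjk, rfl⟩ := card_eq_three.1 hTcard
  simp only [insert_subset_iff, singleton_subset_iff, mem_supportOn] at hT
  obtain ⟨⟨hiI, hi⟩, ⟨hjI, hj⟩, hkI, hk⟩ := hT
  choose b hb using exists_quadraticChar_eq (F := ZMod p) (ringChar_zmod_ne_two (by omega))
  obtain ⟨r, s, t, hr, hs, ht, hrst⟩ := exists_quadraticChar_eq_and_sum_three_eq hp hi hj hk
    (ε i) (ε j) (ε k) (-∑ m ∈ I \ {i, j, k}, b (ε m) * x m)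
  refine ⟨fun m => if m = i then r else if m = j then s else if m = k then t else b (ε m),
    fun m _ => ?_, ?_⟩
  · beta_reduce
    split_ifs with hmi hmj hmk
    exacts [hmi ▸ hr, hmj ▸ hs, hmk ▸ ht, hb _]
  · have hsub : {i, j, k} ⊆ I := by
      simp only [insert_subset_iff, singleton_subset_iff, hiI, hjI, hkI, and_self]
    have hrest : ∑ m ∈ I \ {i, j, k}, (if m = i then r else if m = j then s else
        if m = k then t else b (ε m)) * x m = ∑ m ∈ I \ {i, j, k}, b (ε m) * x m := by
      refine sum_congr rfl fun m hm => ?_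
      simp only [mem_sdiff, mem_insert, mem_singleton, not_or] at hm
      rw [if_neg hm.2.1, if_neg hm.2.2.1, if_neg hm.2.2.2]
    rw [← sum_sdiff hsub, hrest, neg_eq_iff_add_eq_zero.1 hrst.symm |>.symm]
    simp [hij, hik, hjk, hij.symm, hik.symm, hjk.symm, add_assoc]

lemma IsSignedZeroSum.of_card_supportOn_ne_two (hp : 7 ≤ p) (h : IsSignedZeroSum ε x I)
    (hcard : #(supportOn x I) ≠ 2) (δ : ι → ℤˣ) : IsSignedZeroSum δ x I := by
  by_cases hempty : supportOn x I = ∅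
  · exact h.congr_supportOn (ringChar_zmod_ne_two (by omega)) rfl (by simp [hempty])
  · have hpos := card_pos.2 (nonempty_iff_ne_empty.2 hempty)
    have hone := h.card_supportOn_ne_one
    exact isSignedZeroSum_of_three_le_card hp (by omega) δ

lemma IsSignedZeroSum.exists_insert [DecidableEq ι] (hp : 7 ≤ p) (h : IsSignedZeroSum ε x I)
    (hcard : 2 ≤ #(supportOn x I)) {t : ι} (ht : t ∉ supportOn x I) :
    ∃ δ, IsSignedZeroSum δ x (insert t I) := by
  by_cases hxt : x t = 0
  · exact ⟨ε, h.congr_supportOn (ringChar_zmod_ne_two (by omega))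
      (supportOn_insert_of_eq_zero hxt).symm fun _ _ => rfl⟩
  · refine ⟨1, isSignedZeroSum_of_three_le_card hp ?_ 1⟩
    rw [supportOn_insert_of_ne_zero hxt, card_insert_of_notMem ht]
    omega

end SignedZeroSum

section PrimeResidues

instance fact_prime_of_primeFactors {n : ℕ} (p : n.primeFactors) : Fact (p : ℕ).Prime :=
  ⟨Nat.prime_of_mem_primeFactors p.2⟩

/-- The Chinese remainder isomorphism from `ZMod n`, for squarefree `n`, to the product of the
prime fields `ZMod p` over the prime divisors `p` of `n`. -/
noncomputable def primeResidues {n : ℕ} (hsf : Squarefree n) :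
    ZMod n ≃+* ∀ p : n.primeFactors, ZMod p :=
  (ZMod.ringEquivCongr <| by
    rw [prod_coe_sort n.primeFactors fun p => p]
    exact (Nat.prod_primeFactors_of_squarefree hsf).symm).trans <|
  ZMod.prodEquivPi (fun p : n.primeFactors => (p : ℕ)) fun p q hpq =>
    (Nat.coprime_primes Fact.out Fact.out).2 (Subtype.coe_injective.ne hpq)

variable {n : ℕ} (hsf : Squarefree n)

lemma isUnit_iff_primeResidues_ne_zero {a : ZMod n} :
    IsUnit a ↔ ∀ p, primeResidues hsf a p ≠ 0 := by
  simp only [← MulEquiv.isUnit_map (primeResidues hsf), Pi.isUnit_iff, isUnit_iff_ne_zero]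

include hsf in
lemma jacobiSym_eq_prod_quadraticChar (m : ℤ) :
    jacobiSym m n = ∏ p : n.primeFactors, quadraticChar (ZMod p) m := by
  have hnodup := (Nat.squarefree_iff_nodup_primeFactorsList hsf.ne_zero).1 hsf
  have hlist := jacobiSym.list_prod_right (a := m) (l := n.primeFactorsList)
    fun q hq => (Nat.prime_of_mem_primeFactorsList hq).ne_zero
  rw [Nat.prod_primeFactorsList hsf.ne_zero, ← List.prod_toFinset _ hnodup,
    Nat.toFinset_factors] at hlist
  rw [hlist, ← prod_coe_sort]
  exact prod_congr rfl fun p _ => (jacobiSym.legendreSym.to_jacobiSym p m).symm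

lemma mem_JSet_iff {a : ZMod n} :
    a ∈ JSet n ↔ ∏ p, quadraticChar _ (primeResidues hsf a p) = 1 := by
  have : NeZero n := ⟨hsf.ne_zero⟩
  have hres (p : n.primeFactors) : ((a.val : ℤ) : ZMod p) = primeResidues hsf a p := by
    conv_rhs => rw [← ZMod.natCast_zmod_val a, map_natCast]
    simp
  have hjac : jacobiSym a.val n = ∏ p, quadraticChar _ (primeResidues hsf a p) := by
    simp only [jacobiSym_eq_prod_quadraticChar hsf, hres]
  refine ⟨fun h => hjac ▸ h.2, fun h => ⟨?_, hjac.trans h⟩⟩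
  refine (isUnit_iff_primeResidues_ne_zero hsf).2 fun p hp => ?_
  have hχ : quadraticChar _ (primeResidues hsf a p) = 0 := quadraticChar_eq_zero_iff.2 hp
  exact zero_ne_one ((prod_eq_zero (mem_univ p) hχ).symm.trans h)

include hsf in
lemma one_mem_JSet : 1 ∈ JSet n := by
  simp [mem_JSet_iff hsf]

end PrimeResidues

section LocalToGlobal

variable {n l : ℕ} {hsf : Squarefree n} {S : Fin l → ZMod n} {I : Finset (Fin l)}

/-- The sequence of residues of `S` modulo the prime divisor `p` of `n`. -/
noncomputable def residueSeq (hsf : Squarefree n) (S : Fin l → ZMod n) (p : n.primeFactors) :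
    Fin l → ZMod p :=
  fun i => primeResidues hsf (S i) p

lemma exists_residueSeq_ne_zero {i : Fin l} (hi : S i ≠ 0) : ∃ p, residueSeq hsf S p i ≠ 0 := by
  by_contra! h
  exact hi ((map_eq_zero_iff _ (primeResidues hsf).injective).1 (funext h))

lemma sum_mul_eq_zero_iff_residueSeq (a : Fin l → ZMod n) :
    ∑ i ∈ I, a i * S i = 0 ↔
      ∀ p, ∑ i ∈ I, primeResidues hsf (a i) p * residueSeq hsf S p i = 0 := by
  rw [← map_eq_zero_iff _ (primeResidues hsf).injective, funext_iff]
  simp [residueSeq]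

lemma exists_isSignedZeroSum_residueSeq {a : Fin l → ZMod n} (ha : ∀ i ∈ I, a i ∈ USet n)
    (hsum : ∑ i ∈ I, a i * S i = 0) (p : n.primeFactors) :
    ∃ ε, IsSignedZeroSum ε (residueSeq hsf S p) I :=
  exists_isSignedZeroSum_of_sum_eq_zero
    (fun i hi => (isUnit_iff_primeResidues_ne_zero hsf).1 (ha i hi) p)
    ((sum_mul_eq_zero_iff_residueSeq a).1 hsum p)

lemma hasWZSSub_JSet_of_prod_eq_one (hI : I.Nonempty) {ε : n.primeFactors → Fin l → ℤˣ}
    (hε : ∀ p, IsSignedZeroSum (ε p) (residueSeq hsf S p) I) (hprod : ∏ p, ε p = 1) :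
    HasWZSSub (JSet n) S := by
  choose b hb hsum using hε
  have ha (i : Fin l) : primeResidues hsf ((primeResidues hsf).symm fun p => b p i) =
      fun p => b p i := (primeResidues hsf).apply_symm_apply _
  refine ⟨I, hI, fun i => (primeResidues hsf).symm fun p => b p i, fun i hi => ?_, ?_⟩
  · simp only [mem_JSet_iff hsf, ha, hb _ i hi]
    rw [← Units.coe_prod, ← Finset.prod_apply, hprod, Pi.one_apply, Units.val_one]
  · simpa only [sum_mul_eq_zero_iff_residueSeq (hsf := hsf), ha] using hsum

lemma hasWZSSub_JSet_of_card_supportOn_ne_two (hI : I.Nonempty)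
    (hloc : ∀ p, ∃ ε, IsSignedZeroSum ε (residueSeq hsf S p) I) {q : n.primeFactors}
    (hq7 : 7 ≤ (q : ℕ)) (hq : #(supportOn (residueSeq hsf S q) I) ≠ 2) :
    HasWZSSub (JSet n) S := by
  choose ε hε using hloc
  refine hasWZSSub_JSet_of_prod_eq_one (hsf := hsf) hI
    (ε := Function.update ε q (∏ p ∈ univ \ {q}, ε p)⁻¹) (fun p => ?_) ?_
  · rcases eq_or_ne p q with rfl | hp
    · exact (hε p).of_card_supportOn_ne_two hq7 hq _
    · simpa only [Function.update_of_ne hp] using hε p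
  · rw [prod_update_of_mem (mem_univ q), inv_mul_cancel]

lemma hasWZSSub_JSet_of_pair (hI : I.Nonempty)
    (hloc : ∀ p, ∃ ε, IsSignedZeroSum ε (residueSeq hsf S p) I) {q r : n.primeFactors} (hqr : q ≠ r)
    (hpair : ∀ π, ∃ ε δ, IsSignedZeroSum ε (residueSeq hsf S q) I ∧
      IsSignedZeroSum δ (residueSeq hsf S r) I ∧ ε * δ = π) :
    HasWZSSub (JSet n) S := by
  choose ε hε using hloc
  obtain ⟨εq, εr, hεq, hεr, hmul⟩ := hpair (∏ p ∈ (univ \ {q}) \ {r}, ε p)⁻¹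
  refine hasWZSSub_JSet_of_prod_eq_one (hsf := hsf) hI
    (ε := Function.update (Function.update ε r εr) q εq) (fun p => ?_) ?_
  · rcases eq_or_ne p q with rfl | hpq
    · simpa only [Function.update_self] using hεq
    rcases eq_or_ne p r with rfl | hpr
    · simpa only [Function.update_of_ne hpq, Function.update_self] using hεr
    · simpa only [Function.update_of_ne hpq, Function.update_of_ne hpr] using hε p
  · have hr : r ∈ univ \ {q} := by simpa using hqr.symm
    rw [prod_update_of_mem (mem_univ q), prod_update_of_mem hr, ← mul_assoc, hmul, inv_mul_cancel]

lemma hasWZSSub_JSet_of_supportOn_ne (h7 : ∀ p : n.primeFactors, 7 ≤ (p : ℕ)) (hI : I.Nonempty)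
    (hloc : ∀ p, ∃ ε, IsSignedZeroSum ε (residueSeq hsf S p) I)
    (hcard : ∀ p, #(supportOn (residueSeq hsf S p) I) = 2) {q r : n.primeFactors}
    (hqr : supportOn (residueSeq hsf S q) I ≠ supportOn (residueSeq hsf S r) I) :
    HasWZSSub (JSet n) S := by
  obtain ⟨v, hvq, hvr⟩ := not_subset.1 fun hsub =>
    hqr (eq_of_subset_of_card_le hsub (by rw [hcard, hcard]))
  obtain ⟨w, hw⟩ := card_eq_one.1 ((card_erase_of_mem hvq).trans (by rw [hcard]))
  have hvw : supportOn (residueSeq hsf S q) I ⊆ {v, w} := by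
    rw [← hw, insert_erase hvq]
  obtain ⟨ε, hε⟩ := hloc q
  obtain ⟨δ, hδ⟩ := hloc r
  have hchar (p : n.primeFactors) : ringChar (ZMod p) ≠ 2 :=
    ringChar_zmod_ne_two (by linarith [h7 p])
  exact hasWZSSub_JSet_of_pair hI hloc (by rintro rfl; exact hqr rfl)
    (hε.exists_mul_eq (hchar q) (hchar r) hδ hvw hvr)

lemma hasWZSSub_JSet_of_common_supportOn (h7 : ∀ p : n.primeFactors, 7 ≤ (p : ℕ)) (hl : 3 ≤ l)
    (hS : ∀ i, S i ≠ 0) (hloc : ∀ p, ∃ ε, IsSignedZeroSum ε (residueSeq hsf S p) I)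
    {J : Finset (Fin l)} (hJ : #J = 2) (hsupp : ∀ p, supportOn (residueSeq hsf S p) I = J) :
    HasWZSSub (JSet n) S := by
  obtain ⟨t, -, ht⟩ := exists_mem_notMem_of_card_lt_card (s := J) (t := univ)
    (by rw [hJ, card_fin]; omega)
  obtain ⟨q, hq⟩ := exists_residueSeq_ne_zero (hsf := hsf) (hS t)
  refine hasWZSSub_JSet_of_card_supportOn_ne_two (hsf := hsf) (insert_nonempty t I) (fun p => ?_)
    (h7 q) ?_
  · obtain ⟨ε, hε⟩ := hloc p
    exact hε.exists_insert (h7 p) (by rw [hsupp, hJ]) (by rwa [hsupp])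
  · rw [supportOn_insert_of_ne_zero hq, hsupp, card_insert_of_notMem ht, hJ]
    decide

end LocalToGlobal

section WeightedDavenport

variable {n l : ℕ} {A B : Set (ZMod n)} {S : Fin l → ZMod n}

lemma HasWZSSub.mono (hAB : A ⊆ B) (h : HasWZSSub A S) : HasWZSSub B S := by
  obtain ⟨I, hI, a, ha, hsum⟩ := h
  exact ⟨I, hI, a, fun i hi => hAB (ha i hi), hsum⟩

lemma HasWZSSub.of_eq_zero (hA : A.Nonempty) {t : Fin l} (ht : S t = 0) : HasWZSSub A S := by
  obtain ⟨a, ha⟩ := hA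
  exact ⟨{t}, singleton_nonempty t, fun _ => a, fun _ _ => ha, by simp [ht]⟩

lemma hasWZSSub_JSet_iff_USet (hsf : Squarefree n) (h7 : ∀ p : n.primeFactors, 7 ≤ (p : ℕ))
    (hl : 3 ≤ l) : HasWZSSub (JSet n) S ↔ HasWZSSub (USet n) S := by
  refine ⟨.mono fun a ha => ha.1, fun ⟨I, hI, a, ha, hsum⟩ => ?_⟩
  have hloc := exists_isSignedZeroSum_residueSeq (hsf := hsf) ha hsum
  by_cases hS : ∃ t, S t = 0
  · obtain ⟨t, ht⟩ := hS
    exact .of_eq_zero ⟨1, one_mem_JSet hsf⟩ ht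
  push Not at hS
  by_cases hcard : ∃ q, #(supportOn (residueSeq hsf S q) I) ≠ 2
  · obtain ⟨q, hq⟩ := hcard
    exact hasWZSSub_JSet_of_card_supportOn_ne_two hI hloc (h7 q) hq
  push Not at hcard
  obtain ⟨i, hi⟩ := hI
  obtain ⟨q, -⟩ := exists_residueSeq_ne_zero (hsf := hsf) (hS i)
  by_cases hsupp : ∃ p, supportOn (residueSeq hsf S p) I ≠ supportOn (residueSeq hsf S q) I
  · obtain ⟨p, hp⟩ := hsupp
    exact hasWZSSub_JSet_of_supportOn_ne h7 ⟨i, hi⟩ hloc hcard hp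
  · push Not at hsupp
    exact hasWZSSub_JSet_of_common_supportOn h7 hl hS hloc (hcard q) hsupp

lemma DavW_le {k : ℕ} (hk : 0 < k) (h : ∀ S : Fin k → ZMod n, HasWZSSub A S) : DavW n A ≤ k :=
  Nat.sInf_le ⟨hk, h⟩

lemma exists_forall_hasWZSSub [NeZero n] (h1 : 1 ∈ A) :
    ∃ k, 0 < k ∧ ∀ S : Fin k → ZMod n, HasWZSSub A S := by
  have hn := NeZero.pos n
  refine ⟨2 * n - 1, by omega, fun S => ?_⟩
  obtain ⟨I, -, hI, hsum⟩ := ZMod.erdos_ginzburg_ziv (s := univ) S (card_fin _).ge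
  exact ⟨I, card_pos.1 (hI.symm ▸ hn), 1, fun _ _ => h1, by simpa using hsum⟩

lemma DavW_spec [NeZero n] (h1 : 1 ∈ A) :
    0 < DavW n A ∧ ∀ S : Fin (DavW n A) → ZMod n, HasWZSSub A S :=
  Nat.sInf_mem (exists_forall_hasWZSSub h1)

lemma DavW_anti [NeZero n] (h1 : 1 ∈ A) (hAB : A ⊆ B) : DavW n B ≤ DavW n A :=
  DavW_le (DavW_spec h1).1 fun S => ((DavW_spec h1).2 S).mono hAB

-- The partial products `1, p₁, p₁p₂, …` of the prime factors of `n`: in a `U(n)`-weighted sum the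
-- earliest term is not divisible by the partial product following it, which divides all the others.
lemma exists_not_hasWZSSub_USet (hl : l ≤ n.primeFactorsList.length) :
    ∃ S : Fin l → ZMod n, ¬ HasWZSSub (USet n) S := by
  let P (k : ℕ) : ℕ := (n.primeFactorsList.take k).prod
  refine ⟨fun i => (P i : ZMod n), ?_⟩
  rintro ⟨I, hI, a, ha, hsum⟩
  set i := I.min' hI
  have hi : (i : ℕ) < n.primeFactorsList.length := i.2.trans_le hl
  have hn : n ≠ 0 := by
    rintro rfl
    simp at hi
  have hP_dvd {j k : ℕ} (hjk : j ≤ k) : P j ∣ P k :=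
    (List.take_sublist_take_left hjk).prod_dvd_prod
  have hP_dvd_n (k : ℕ) : P k ∣ n :=
    (List.take_sublist k _).prod_dvd_prod.trans (Nat.prod_primeFactorsList hn).dvd
  have hP_lt : P i < P (i + 1) := by
    rw [show P (i + 1) = P i * n.primeFactorsList[(i : ℕ)] from List.prod_take_succ _ _ hi]
    exact lt_mul_of_one_lt_right (Nat.pos_of_dvd_of_pos (hP_dvd_n i) (Nat.pos_of_ne_zero hn))
      (Nat.prime_of_mem_primeFactorsList (List.getElem_mem hi)).one_lt
  have hsum_mod := congr_arg (ZMod.castHom (hP_dvd_n (i + 1)) (ZMod (P (i + 1)))) hsum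
  simp only [map_sum, map_mul, map_natCast, map_zero] at hsum_mod
  rw [sum_eq_single_of_mem i (I.min'_mem hI) fun j hj hji => ?_] at hsum_mod
  · rw [((ha i (I.min'_mem hI)).map _).mul_right_eq_zero, ZMod.natCast_eq_zero_iff] at hsum_mod
    exact hP_lt.not_ge (Nat.le_of_dvd (Nat.pos_of_dvd_of_pos (hP_dvd_n i)
      (Nat.pos_of_ne_zero hn)) hsum_mod)
  · have hij : i < j := lt_of_le_of_ne (I.min'_le j hj) hji.symm
    rw [(ZMod.natCast_eq_zero_iff _ _).2 (hP_dvd hij), mul_zero]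

lemma length_primeFactorsList_lt_DavW_USet [NeZero n] :
    n.primeFactorsList.length < DavW n (USet n) := by
  by_contra! hle
  obtain ⟨S, hS⟩ := exists_not_hasWZSSub_USet hle
  exact hS ((DavW_spec isUnit_one).2 S)

lemma DavW_JSet_eq_USet (hsf : Squarefree n) (h7 : ∀ p : n.primeFactors, 7 ≤ (p : ℕ))
    (hD : 3 ≤ DavW n (USet n)) : DavW n (JSet n) = DavW n (USet n) := by
  have : NeZero n := ⟨hsf.ne_zero⟩
  refine le_antisymm (DavW_le (by omega) fun S => ?_)
    (DavW_anti (one_mem_JSet hsf) fun a ha => ha.1)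
  exact (hasWZSSub_JSet_iff_USet hsf h7 hD).2 ((DavW_spec isUnit_one).2 S)

end WeightedDavenport

theorem extremal_S_iff_U (n : ℕ) (hodd : Odd n) (hsf : Squarefree n)
    (hOmega : 3 ≤ (Nat.primeFactorsList n).length)
    (hp7 : ∀ p : ℕ, p.Prime → p ∣ n → 7 ≤ p)
    {l : ℕ} (S : Fin l → ZMod n) :
    IsExtremal n (JSet n) S ↔ IsExtremal n (USet n) S := by
  have : NeZero n := ⟨hsf.ne_zero⟩
  have h7 (p : n.primeFactors) : 7 ≤ (p : ℕ) := hp7 p Fact.out (Nat.dvd_of_mem_primeFactors p.2)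
  have hD : n.primeFactorsList.length < DavW n (USet n) := length_primeFactorsList_lt_DavW_USet
  unfold IsExtremal
  rw [DavW_JSet_eq_USet hsf h7 (by omega)]
  exact and_congr_right fun hl => not_congr (hasWZSSub_JSet_iff_USet hsf h7 (by omega))
end
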